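/- arXiv:math-ph/0304042 — 6 statements merged into one kernel-verified Lean document; each statement's English description precedes it below -/
import Mathlib

section
/- Let φ₀ = −p + 2q² + t and φ₁ = p in ℂ[q,p,t]. Then these two polynomials satisfy the Serre relations of type A₁⁽¹⁾ with respect to the Poisson bracket, namely ad(φ₀)³(φ₁) = 0 and ad(φ₁)³(φ₀) = 0 (the exponent 3 = −a₀₁ + 1 = −a₁₀ + 1 for the Cartan matrix of type A₁⁽¹⁾, whose off-diagonal entries are −2). -/
/-!
Serre relations of type A₁⁽¹⁾ for the invariant divisors of the second
Painlevé equation.  We work in the polynomial ring ℂ[q,p,t], realized as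
`MvPolynomial (Fin 3) ℂ` with `q = X 0`, `p = X 1`, `t = X 2`, equipped with
the Poisson bracket {φ,ψ} = (∂φ/∂p)(∂ψ/∂q) − (∂φ/∂q)(∂ψ/∂p).
-/

open MvPolynomial

noncomputable section

/-- The Poisson bracket on ℂ[q,p,t]: {φ,ψ} = φ_p ψ_q − φ_q ψ_p. -/
def poissonBracket (φ ψ : MvPolynomial (Fin 3) ℂ) : MvPolynomial (Fin 3) ℂ :=
  pderiv 1 φ * pderiv 0 ψ - pderiv 0 φ * pderiv 1 ψ

/-!
The operator `ad p` is `∂/∂q`. Write `φ₀ = -p + g` with `g = 2q² + t`, which does not involve `p`.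
On polynomials not involving `p`, the operator `ad φ₀` is `-∂/∂q`, and `{φ₀, p} = -∂g/∂q` again
does not involve `p`. Hence both Serre relations reduce to `∂³g/∂q³ = 0`, that is, to `g` being
quadratic in `q`.
-/

section PartialDerivatives

variable {σ R : Type*} [CommSemiring R]

theorem pderiv_commute (i j : σ) :
    Function.Commute (pderiv i : MvPolynomial σ R → MvPolynomial σ R) (pderiv j) := by
  classical
  intro f
  obtain rfl | hij := eq_or_ne i j
  · rfl
  ext m
  simp [coeff_pderiv, hij, hij.symm, add_right_comm _ (Finsupp.single i 1), mul_right_comm]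

theorem pderiv_iterate_pderiv_eq_zero {i : σ} {f : MvPolynomial σ R} (hf : pderiv i f = 0)
    (j : σ) (n : ℕ) : pderiv i ((pderiv j)^[n] f) = 0 := by
  rw [((pderiv_commute i j).iterate_right n).eq, hf, iterate_map_zero]

theorem pderiv_iterate_succ_add_of_pderiv_eq_zero {i : σ} {f : MvPolynomial σ R}
    (hf : pderiv i f = 0) (g : MvPolynomial σ R) (n : ℕ) :
    (pderiv i)^[n + 1] (f + g) = (pderiv i)^[n + 1] g := by
  simp only [Function.iterate_succ_apply, map_add, hf, zero_add]

end PartialDerivatives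

theorem poissonBracket_swap (φ ψ : MvPolynomial (Fin 3) ℂ) :
    poissonBracket φ ψ = -poissonBracket ψ φ := by
  simp only [poissonBracket]
  ring

theorem poissonBracket_X_one : poissonBracket (X 1) = pderiv 0 := by
  funext ψ
  simp [poissonBracket]

section MomentumShift

variable {g : MvPolynomial (Fin 3) ℂ}

theorem poissonBracket_neg_X_one_add_X_one (g : MvPolynomial (Fin 3) ℂ) :
    poissonBracket (-X 1 + g) (X 1) = -pderiv 0 g := by
  rw [poissonBracket_swap, poissonBracket_X_one]
  simp

theorem poissonBracket_neg_X_one_add {h : MvPolynomial (Fin 3) ℂ} (hg : pderiv 1 g = 0)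
    (hh : pderiv 1 h = 0) : poissonBracket (-X 1 + g) h = -pderiv 0 h := by
  simp [poissonBracket, hg, hh]

theorem poissonBracket_neg_X_one_add_iterate_X_one (hg : pderiv 1 g = 0) (n : ℕ) :
    (poissonBracket (-X 1 + g))^[n + 1] (X 1) = (-1 : ℂ) ^ (n + 1) • (pderiv 0)^[n + 1] g := by
  induction n with
  | zero => simp [poissonBracket_neg_X_one_add_X_one]
  | succ n ih =>
    have hp : pderiv 1 ((-1 : ℂ) ^ (n + 1) • (pderiv 0)^[n + 1] g) = 0 := by
      rw [Derivation.map_smul, pderiv_iterate_pderiv_eq_zero hg, smul_zero]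
    rw [Function.iterate_succ_apply', ih, poissonBracket_neg_X_one_add hg hp,
      Derivation.map_smul, Function.iterate_succ_apply' _ (n + 1) g,
      pow_succ _ (n + 1), mul_neg_one, neg_smul]

theorem serre_relations_of_pderiv_iterate_eq_zero (hg : pderiv 1 g = 0) {n : ℕ}
    (hn : (pderiv 0)^[n + 1] g = 0) :
    (poissonBracket (-X 1 + g))^[n + 1] (X 1) = 0 ∧
      (poissonBracket (X 1))^[n + 1] (-X 1 + g) = 0 := by
  constructor
  · rw [poissonBracket_neg_X_one_add_iterate_X_one hg, hn, smul_zero]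
  · rw [poissonBracket_X_one, pderiv_iterate_succ_add_of_pderiv_eq_zero (by simp), hn]

end MomentumShift

/-- with φ₀ = −p + 2q² + t and φ₁ = p, one has
ad(φ₀)³(φ₁) = 0 and ad(φ₁)³(φ₀) = 0, the Serre relations of type A₁⁽¹⁾. -/
theorem serre_relations_A1_affine_PII :
    let q : MvPolynomial (Fin 3) ℂ := X 0
    let p : MvPolynomial (Fin 3) ℂ := X 1
    let t : MvPolynomial (Fin 3) ℂ := X 2
    let φ0 : MvPolynomial (Fin 3) ℂ := -p + 2 * q ^ 2 + t
    let φ1 : MvPolynomial (Fin 3) ℂ := p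
    poissonBracket φ0 (poissonBracket φ0 (poissonBracket φ0 φ1)) = 0 ∧
    poissonBracket φ1 (poissonBracket φ1 (poissonBracket φ1 φ0)) = 0 := by
  intro q p t φ0 φ1
  have two_eq : (2 : MvPolynomial (Fin 3) ℂ) = C 2 := rfl
  have hp : pderiv 1 (2 * q ^ 2 + t) = 0 := by
    simp [q, t, two_eq]
  have hq : (pderiv 0)^[3] (2 * q ^ 2 + t) = 0 := by
    simp [q, t, two_eq]
  have hφ0 : φ0 = -X 1 + (2 * q ^ 2 + t) := add_assoc _ _ _
  rw [hφ0]
  exact serre_relations_of_pderiv_iterate_eq_zero hp hq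

end
end

section
/- The assignments sᵢ(αⱼ) = αⱼ − αᵢaᵢⱼ, sᵢ(φⱼ) = φⱼ + (αᵢ/φᵢ)uᵢⱼ (for i,j ∈ {0,1,2}) and π(αⱼ) = α_{j+1}, π(φⱼ) = φ_{j+1} extend to field automorphisms s₀, s₁, s₂, π of K = ℂ(α₀,α₁,α₂,φ₀,φ₁,φ₂), and these automorphisms satisfy the fundamental relations of the extended affine Weyl group of type A₂⁽¹⁾: sᵢ² = 1, (sᵢs_{i+1})³ = 1, and πsᵢ = s_{i+1}π for all i ∈ {0,1,2} (indices read modulo 3). -/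
/-!
The birational realization of the extended affine Weyl group of type A₂⁽¹⁾
as Bäcklund transformations of the symmetric form of the fourth Painlevé
equation.  K = ℂ(α₀,α₁,α₂,φ₀,φ₁,φ₂) is realized as the fraction field of
the polynomial ring in six variables indexed by `ZMod 3 ⊕ ZMod 3`
(`Sum.inl j` ↦ αⱼ, `Sum.inr j` ↦ φⱼ).
-/

open MvPolynomial

noncomputable section

abbrev PolyP4 := MvPolynomial (ZMod 3 ⊕ ZMod 3) ℂ

abbrev KP4 := FractionRing PolyP4

/-- The parameter variables α₀, α₁, α₂ of the symmetric form of P_IV. -/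
def αv (j : ZMod 3) : KP4 := algebraMap PolyP4 KP4 (X (Sum.inl j))

/-- The unknown variables φ₀, φ₁, φ₂ of the symmetric form of P_IV. -/
def φv (j : ZMod 3) : KP4 := algebraMap PolyP4 KP4 (X (Sum.inr j))

/-- The Cartan matrix of type A₂⁽¹⁾: aᵢᵢ = 2, aᵢⱼ = −1 for i ≠ j. -/
def cartanA2 (i j : ZMod 3) : ℤ := if i = j then 2 else -1

/-- The orientation matrix of the triangle: uᵢᵢ = 0, u_{i,i+1} = 1, u_{i,i+2} = −1. -/
def orientA2 (i j : ZMod 3) : ℤ := if j = i then 0 else if j = i + 1 then 1 else -1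

/-!
If a finitely generated purely transcendental extension `k(X₁, …, Xₙ)` is generated by
`v₁, …, vₙ`, then the `vᵢ` are algebraically independent because the transcendence degree is `n`,
so `Xᵢ ↦ vᵢ` extends to an automorphism. The images of the variables under `sᵢ` do generate the
field, as `αᵢ` and `φᵢ`, and then all other variables, are recovered from them.

An automorphism is determined by the images of the variables, and the relations can be checked on
these. In view of `sᵢ² = 1`, the relation `(sᵢsⱼ)³ = 1` is the braid relation
`sᵢsⱼsᵢ = sⱼsᵢsⱼ`, which becomes visible once `sᵢsⱼsᵢ` is computed on a variable: the result is
symmetric in `i` and `j`.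
-/

section RationalFunctionField

variable {k L σ : Type*} [Field k] [Field L] [Algebra k L]

lemma algebraicIndependent_of_adjoin_range_eq_top [Finite σ] {x v : σ → L}
    (hx : AlgebraicIndependent k x) (hv : IntermediateField.adjoin k (Set.range v) = ⊤) :
    AlgebraicIndependent k v := by
  have : Algebra.IsAlgebraic (Algebra.adjoin k (Set.range v)) L := by
    rw [← IntermediateField.isAlgebraic_adjoin_iff_top, hv]
    infer_instance
  exact (Algebra.IsAlgebraic.isTranscendenceBasis_of_lift_le_trdeg_of_finite k v
    hx.lift_cardinalMk_le_trdeg).1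

/-- The field `k(Xᵢ : i ∈ σ)` of rational functions, as the fraction field of `k[Xᵢ : i ∈ σ]`. -/
abbrev RatFunField (k σ : Type*) [Field k] : Type _ := FractionRing (MvPolynomial σ k)

/-- The variable `Xᵢ` of the field of rational functions `k(Xᵢ : i ∈ σ)`. -/
def ratVar (k : Type*) {σ : Type*} [Field k] (i : σ) : RatFunField k σ :=
  algebraMap (MvPolynomial σ k) _ (X i)

/-- The variable `αᵢ` of `k(αᵢ, φᵢ : i ∈ ι)`, whose variables are indexed by `ι ⊕ ι`. -/
abbrev parameterVar (k : Type*) {ι : Type*} [Field k] (i : ι) : RatFunField k (ι ⊕ ι) :=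
  ratVar k (Sum.inl i)

/-- The variable `φᵢ` of `k(αᵢ, φᵢ : i ∈ ι)`, whose variables are indexed by `ι ⊕ ι`. -/
abbrev unknownVar (k : Type*) {ι : Type*} [Field k] (i : ι) : RatFunField k (ι ⊕ ι) :=
  ratVar k (Sum.inr i)

lemma algebraicIndependent_ratVar : AlgebraicIndependent k (ratVar k : σ → RatFunField k σ) :=
  (algebraicIndependent_X σ k).map'
    (f := IsScalarTower.toAlgHom k (MvPolynomial σ k) (RatFunField k σ))
    (IsFractionRing.injective (MvPolynomial σ k) (RatFunField k σ))

lemma adjoin_range_ratVar :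
    IntermediateField.adjoin k (Set.range (ratVar k : σ → RatFunField k σ)) = ⊤ := by
  have hrange : (IsScalarTower.toAlgHom k (MvPolynomial σ k) (RatFunField k σ)).range =
      Algebra.adjoin k (Set.range (ratVar k)) := by
    rw [← Algebra.map_top, ← adjoin_range_X, AlgHom.map_adjoin, ← Set.range_comp]
    rfl
  rw [← IsFractionRing.algHom_fieldRange_eq_of_comp_eq_of_range_eq
    (f := AlgHom.id k (RatFunField k σ)) rfl hrange]
  exact AlgHom.fieldRange_eq_top.2 Function.surjective_id

lemma algEquiv_ext_ratVar {f g : RatFunField k σ ≃ₐ[k] L}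
    (h : ∀ i, f (ratVar k i) = g (ratVar k i)) : f = g := by
  apply AlgEquiv.coe_toAlgHom_injective
  ext i
  exact h i

lemma exists_algEquiv_ratVar_eq {v : σ → L} (hv : AlgebraicIndependent k v)
    (hgen : IntermediateField.adjoin k (Set.range v) = ⊤) :
    ∃ e : RatFunField k σ ≃ₐ[k] L, ∀ i, e (ratVar k i) = v i :=
  ⟨hv.aevalEquivField.trans ((IntermediateField.equivOfEq hgen).trans IntermediateField.topEquiv),
    fun i => by simp [ratVar]⟩

/-- The automorphism of `k(Xᵢ : i ∈ σ)` that permutes the variables by `e`. -/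
def ratRename (e : Equiv.Perm σ) : RatFunField k σ ≃ₐ[k] RatFunField k σ :=
  IsFractionRing.algEquivOfAlgEquiv (renameEquiv k e)

lemma ratRename_ratVar (e : Equiv.Perm σ) (i : σ) :
    ratRename e (ratVar k i) = ratVar k (e i) := by
  simp [ratRename, ratVar]

end RationalFunctionField

lemma mul_pow_three_eq_one_of_braid {M : Type*} [Monoid M] {s t : M} (hs : s * s = 1)
    (ht : t * t = 1) (hbraid : s * t * s = t * s * t) : (s * t) ^ 3 = 1 :=
  calc (s * t) ^ 3 = (s * t * s) * (t * s * t) := by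
        simp only [pow_succ, pow_zero, one_mul, mul_assoc]
    _ = (s * t * s) * (s * t * s) := by rw [hbraid]
    _ = s * (t * (s * s) * t) * s := by simp only [mul_assoc]
    _ = 1 := by rw [hs, mul_one, ht, mul_one, hs]

/-- The action of the `i`-th simple reflection, in its birational realization with Cartan matrix
`C` and orientation matrix `U`, on the parameters `α` and the unknowns `φ`. The elements `α j`
and `φ j` need not be independent variables, and `s` may be any kind of map. -/
structure IsBirationalReflection {ι F S : Type*} [Field F] [FunLike S F F] (C U : Matrix ι ι ℤ)
    (α φ : ι → F) (i : ι) (s : S) : Prop where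
  map_parameter : ∀ j, s (α j) = α j - (C i j : F) * α i
  map_unknown : ∀ j, s (φ j) = φ j + (U i j : F) * (α i / φ i)

namespace IsBirationalReflection

section Field

variable {ι F S T : Type*} [Field F] [FunLike S F F] [FunLike T F F] {C U : Matrix ι ι ℤ}
  {α φ : ι → F} {i j : ι} {s : S} {t : T}

lemma map_parameter_self (hs : IsBirationalReflection C U α φ i s) (hC : C i i = 2) :
    s (α i) = -α i := by
  rw [hs.map_parameter, hC]
  push_cast
  ring

lemma map_parameter_of_eq_neg_one (hs : IsBirationalReflection C U α φ i s) (hC : C i j = -1) :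
    s (α j) = α i + α j := by
  rw [hs.map_parameter, hC]
  push_cast
  ring

lemma map_unknown_self (hs : IsBirationalReflection C U α φ i s) (hU : U i i = 0) :
    s (φ i) = φ i := by
  rw [hs.map_unknown, hU, Int.cast_zero, zero_mul, add_zero]

lemma map_unknown_eq_div (hs : IsBirationalReflection C U α φ i s) (hφi : φ i ≠ 0) :
    s (φ j) = (φ i * φ j + U i j * α i) / φ i := by
  rw [hs.map_unknown]
  field_simp

variable [RingHomClass S F F] [RingHomClass T F F]

lemma map_map_parameter (hs : IsBirationalReflection C U α φ i s) (hC : C i i = 2) :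
    s (s (α j)) = α j := by
  rw [hs.map_parameter j, map_sub, map_mul, map_intCast, hs.map_parameter_self hC,
    hs.map_parameter j]
  ring

lemma map_map_unknown (hs : IsBirationalReflection C U α φ i s) (hC : C i i = 2)
    (hU : U i i = 0) : s (s (φ j)) = φ j := by
  rw [hs.map_unknown j, map_add, map_mul, map_intCast, map_div₀, hs.map_parameter_self hC,
    hs.map_unknown_self hU, hs.map_unknown j]
  ring

lemma mul_unknowns_add_ne_zero (hs : IsBirationalReflection C U α φ i s) (hφi : φ i ≠ 0)
    (hφj : φ j ≠ 0) : φ i * φ j + U i j * α i ≠ 0 := by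
  have hsφ : s (φ j) ≠ 0 := (map_ne_zero s).2 hφj
  rw [hs.map_unknown_eq_div hφi] at hsφ
  exact (div_ne_zero_iff.1 hsφ).1

lemma map_mul_unknowns_add (hs : IsBirationalReflection C U α φ i s) (hφi : φ i ≠ 0)
    (hUi : U i i = 0) (hC : C i j = -1) (hU : U j i = -U i j) :
    s (φ i * φ j + U j i * α j) = φ i * φ j + U j i * α j := by
  rw [map_add, map_mul, map_mul, map_intCast, hs.map_unknown_self hUi, hs.map_unknown,
    hs.map_parameter_of_eq_neg_one hC, hU]
  push_cast
  field_simp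
  ring

lemma braid_parameter (hs : IsBirationalReflection C U α φ i s)
    (ht : IsBirationalReflection C U α φ j t) (hCi : C i i = 2) (hCij : C i j = -1)
    (hCji : C j i = -1) (l : ι) :
    s (t (s (α l))) = α l - (C i l + C j l) * (α i + α j) := by
  simp only [hs.map_parameter l, ht.map_parameter l, ht.map_parameter_of_eq_neg_one hCji,
    hs.map_parameter_of_eq_neg_one hCij, hs.map_parameter_self hCi, map_sub, map_mul, map_add,
    map_intCast]
  ring

lemma braid_unknown (hs : IsBirationalReflection C U α φ i s)
    (ht : IsBirationalReflection C U α φ j t) (hφi : φ i ≠ 0) (hφj : φ j ≠ 0) (hCi : C i i = 2)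
    (hCij : C i j = -1) (hCji : C j i = -1) (hUi : U i i = 0) (hU : U j i = -U i j) (l : ι) :
    s (t (s (φ l))) = φ l + (α i + α j) *
      (U i l * φ j / (φ i * φ j + U j i * α j) + U j l * φ i / (φ i * φ j + U i j * α i)) := by
  have hq := ht.mul_unknowns_add_ne_zero hφj hφi
  rw [mul_comm (φ j)] at hq
  have hts : t (s (φ l)) = φ l + U j l * (α j / φ j) +
      U i l * ((α i + α j) * φ j / (φ i * φ j + U j i * α j)) := by
    rw [hs.map_unknown, map_add, map_mul, map_intCast, map_div₀, ht.map_unknown l,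
      ht.map_unknown_eq_div hφj, ht.map_parameter_of_eq_neg_one hCji, mul_comm (φ j) (φ i),
      add_comm (α j), div_div_eq_mul_div]
  have hsum : s (α i + α j) = α j := by
    rw [map_add, hs.map_parameter_self hCi, hs.map_parameter_of_eq_neg_one hCij,
      neg_add_cancel_left]
  have hcollect : α i / φ i + α j * ((φ i * φ j + U i j * α i) / φ i) /
      (φ i * φ j + U j i * α j) = (α i + α j) * φ j / (φ i * φ j + U j i * α j) := by
    rw [div_add_div _ _ hφi hq, div_eq_div_iff (mul_ne_zero hφi hq) hq, hU]
    push_cast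
    field_simp
    ring
  calc s (t (s (φ l)))
      = φ l + U i l * (α i / φ i)
        + U j l * ((α i + α j) / ((φ i * φ j + U i j * α i) / φ i))
        + U i l * (α j * ((φ i * φ j + U i j * α i) / φ i) / (φ i * φ j + U j i * α j)) := by
        rw [hts, map_add, map_add, map_mul, map_mul, map_div₀, map_div₀, map_mul, map_intCast,
          map_intCast, hs.map_mul_unknowns_add hφi hUi hCij hU, hsum, hs.map_unknown l,
          hs.map_unknown_eq_div hφi, hs.map_parameter_of_eq_neg_one hCij]
    _ = _ := by
        rw [div_div_eq_mul_div]
        linear_combination (U i l : F) * hcollect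

end Field

section RatFunField

variable {k ι : Type*} [Field k] {C U : Matrix ι ι ℤ} {i j : ι}
  {s t : RatFunField k (ι ⊕ ι) ≃ₐ[k] RatFunField k (ι ⊕ ι)}

lemma mul_self (hs : IsBirationalReflection C U (parameterVar k) (unknownVar k) i s)
    (hC : C i i = 2) (hU : U i i = 0) : s * s = 1 :=
  algEquiv_ext_ratVar <| Sum.rec (fun _ => hs.map_map_parameter hC)
    (fun _ => hs.map_map_unknown hC hU)

lemma braid (hs : IsBirationalReflection C U (parameterVar k) (unknownVar k) i s)
    (ht : IsBirationalReflection C U (parameterVar k) (unknownVar k) j t)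
    (hCi : C i i = 2) (hCj : C j j = 2) (hCij : C i j = -1) (hCji : C j i = -1)
    (hUi : U i i = 0) (hUj : U j j = 0) (hU : U j i = -U i j) :
    s * t * s = t * s * t := by
  have hφ (m : ι) : unknownVar k m ≠ 0 := algebraicIndependent_ratVar.ne_zero _
  refine algEquiv_ext_ratVar (Sum.rec (fun l => ?_) (fun l => ?_))
  · refine (hs.braid_parameter ht hCi hCij hCji l).trans
      (Eq.trans ?_ (ht.braid_parameter hs hCj hCji hCij l).symm)
    ring
  · refine (hs.braid_unknown ht (hφ i) (hφ j) hCi hCij hCji hUi hU l).trans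
      (Eq.trans ?_ (ht.braid_unknown hs (hφ j) (hφ i) hCj hCji hCij hUj (by rw [hU, neg_neg])
        l).symm)
    ring

lemma mul_eq_mul_of_permutes {π : RatFunField k (ι ⊕ ι) ≃ₐ[k] RatFunField k (ι ⊕ ι)} {τ : ι → ι}
    (hs : IsBirationalReflection C U (parameterVar k) (unknownVar k) i s)
    (ht : IsBirationalReflection C U (parameterVar k) (unknownVar k) (τ i) t)
    (hC : ∀ j, C (τ i) (τ j) = C i j) (hU : ∀ j, U (τ i) (τ j) = U i j)
    (hα : ∀ j, π (parameterVar k j) = parameterVar k (τ j))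
    (hφ : ∀ j, π (unknownVar k j) = unknownVar k (τ j)) :
    π * s = t * π := by
  refine algEquiv_ext_ratVar (Sum.rec (fun j => ?_) (fun j => ?_))
  · simp only [AlgEquiv.mul_apply, hs.map_parameter, ht.map_parameter, hα, hC, map_sub, map_mul,
      map_intCast]
  · simp only [AlgEquiv.mul_apply, hs.map_unknown, ht.map_unknown, hα, hφ, hU, map_add, map_mul,
      map_div₀, map_intCast]

end RatFunField

end IsBirationalReflection

/-- The images of the variables `αⱼ = X (inl j)` and `φⱼ = X (inr j)` under the `i`-th simple
reflection, before it is known to extend to the field of rational functions. -/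
def reflectedVar (k : Type*) {ι : Type*} [Field k] (C U : Matrix ι ι ℤ) (i : ι) :
    ι ⊕ ι → RatFunField k (ι ⊕ ι) :=
  Sum.elim
    (fun j => parameterVar k j - (C i j : RatFunField k (ι ⊕ ι)) * parameterVar k i)
    (fun j => unknownVar k j +
      (U i j : RatFunField k (ι ⊕ ι)) * (parameterVar k i / unknownVar k i))

lemma adjoin_range_reflectedVar {k ι : Type*} [Field k] {C U : Matrix ι ι ℤ} {i : ι}
    (hC : C i i = 2) (hU : U i i = 0) :
    IntermediateField.adjoin k (Set.range (reflectedVar k C U i)) = ⊤ := by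
  set E := IntermediateField.adjoin k (Set.range (reflectedVar k C U i))
  have hmem (x : ι ⊕ ι) : reflectedVar k C U i x ∈ E :=
    IntermediateField.subset_adjoin _ _ (Set.mem_range_self x)
  have hα : parameterVar k i ∈ E := by
    have h : reflectedVar k C U i (Sum.inl i) = -parameterVar k i := by
      simp only [reflectedVar, Sum.elim_inl, hC]
      push_cast
      ring
    exact neg_mem_iff.1 (h ▸ hmem (Sum.inl i))
  have hφ : unknownVar k i ∈ E := by
    have h : reflectedVar k C U i (Sum.inr i) = unknownVar k i := by
      simp only [reflectedVar, Sum.elim_inr, hU, Int.cast_zero, zero_mul, add_zero]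
    exact h ▸ hmem (Sum.inr i)
  rw [eq_top_iff, ← adjoin_range_ratVar, IntermediateField.adjoin_le_iff]
  rintro _ ⟨j | j, rfl⟩
  · rw [← sub_add_cancel (ratVar k (Sum.inl j))
      ((C i j : RatFunField k (ι ⊕ ι)) * parameterVar k i)]
    exact add_mem (hmem (Sum.inl j)) (mul_mem (intCast_mem E _) hα)
  · exact (add_mem_cancel_right (mul_mem (intCast_mem E _) (div_mem hα hφ))).1 (hmem (Sum.inr j))

theorem exists_isBirationalReflection {k ι : Type*} [Field k] [Finite ι] (C U : Matrix ι ι ℤ)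
    (i : ι) (hC : C i i = 2) (hU : U i i = 0) :
    ∃ s : RatFunField k (ι ⊕ ι) ≃ₐ[k] RatFunField k (ι ⊕ ι),
      IsBirationalReflection C U (parameterVar k) (unknownVar k) i s := by
  have hgen := adjoin_range_reflectedVar (k := k) hC hU
  have hind := algebraicIndependent_of_adjoin_range_eq_top (x := ratVar k)
    algebraicIndependent_ratVar hgen
  obtain ⟨s, hs⟩ := exists_algEquiv_ratVar_eq hind hgen
  exact ⟨s, fun j => hs (Sum.inl j), fun j => hs (Sum.inr j)⟩

theorem extended_affine_Weyl_A2_realization_PIV_general {k ι : Type*} [Field k] [Finite ι]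
    (C U : Matrix ι ι ℤ) (τ : Equiv.Perm ι) (hC : ∀ i, C i i = 2) (hU : ∀ i, U i i = 0)
    (hCτ : ∀ i j, C (τ i) (τ j) = C i j) (hUτ : ∀ i j, U (τ i) (τ j) = U i j) :
    ∃ (s : ι → (RatFunField k (ι ⊕ ι) ≃ₐ[k] RatFunField k (ι ⊕ ι)))
      (π : RatFunField k (ι ⊕ ι) ≃ₐ[k] RatFunField k (ι ⊕ ι)),
      (∀ i, IsBirationalReflection C U (parameterVar k) (unknownVar k) i (s i)) ∧
      (∀ j, π (parameterVar k j) = parameterVar k (τ j)) ∧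
      (∀ j, π (unknownVar k j) = unknownVar k (τ j)) ∧
      (∀ i, s i * s i = 1) ∧
      (∀ i j, C i j = -1 → C j i = -1 → U j i = -U i j → (s i * s j) ^ 3 = 1) ∧
      (∀ i, π * s i = s (τ i) * π) := by
  choose s hs using fun i => exists_isBirationalReflection (k := k) C U i (hC i) (hU i)
  have hα (j : ι) := ratRename_ratVar (k := k) (τ.sumCongr τ) (Sum.inl j)
  have hφ (j : ι) := ratRename_ratVar (k := k) (τ.sumCongr τ) (Sum.inr j)
  have hinv (i : ι) : s i * s i = 1 := (hs i).mul_self (hC i) (hU i)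
  exact ⟨s, ratRename (τ.sumCongr τ), hs, hα, hφ, hinv,
    fun i j hCij hCji hUij => mul_pow_three_eq_one_of_braid (hinv i) (hinv j)
      ((hs i).braid (hs j) (hC i) (hC j) hCij hCji (hU i) (hU j) hUij),
    fun i => (hs i).mul_eq_mul_of_permutes (hs (τ i)) (hCτ i) (hUτ i) hα hφ⟩

/-- the assignments sᵢ(αⱼ) = αⱼ − αᵢaᵢⱼ, sᵢ(φⱼ) = φⱼ + (αᵢ/φᵢ)uᵢⱼ,
π(αⱼ) = α_{j+1}, π(φⱼ) = φ_{j+1} extend to automorphisms of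
K = ℂ(α₀,α₁,α₂,φ₀,φ₁,φ₂) satisfying the fundamental relations
sᵢ² = 1, (sᵢs_{i+1})³ = 1, πsᵢ = s_{i+1}π of the extended affine Weyl group
of type A₂⁽¹⁾. -/
theorem extended_affine_Weyl_A2_realization_PIV :
    ∃ (s : ZMod 3 → (KP4 ≃ₐ[ℂ] KP4)) (π : KP4 ≃ₐ[ℂ] KP4),
      (∀ i j : ZMod 3, s i (αv j) = αv j - (cartanA2 i j : KP4) * αv i) ∧
      (∀ i j : ZMod 3, s i (φv j) = φv j + (orientA2 i j : KP4) * (αv i / φv i)) ∧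
      (∀ j : ZMod 3, π (αv j) = αv (j + 1)) ∧
      (∀ j : ZMod 3, π (φv j) = φv (j + 1)) ∧
      (∀ i : ZMod 3, s i * s i = 1) ∧
      (∀ i : ZMod 3, (s i * s (i + 1)) ^ 3 = 1) ∧
      (∀ i : ZMod 3, π * s i = s (i + 1) * π) := by
  obtain ⟨s, π, hs, hα, hφ, hinv, hcube, hconj⟩ :=
    extended_affine_Weyl_A2_realization_PIV_general (k := ℂ) cartanA2 orientA2
      (Equiv.addRight (1 : ZMod 3)) (by decide) (by decide) (by decide) (by decide)
  have hC : ∀ i, cartanA2 i (i + 1) = -1 ∧ cartanA2 (i + 1) i = -1 := by decide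
  have hU : ∀ i, orientA2 (i + 1) i = -orientA2 i (i + 1) := by decide
  exact ⟨s, π, fun i => (hs i).map_parameter, fun i => (hs i).map_unknown, hα, hφ, hinv,
    fun i => hcube i (i + 1) (hC i).1 (hC i).2 (hU i), hconj⟩

end
end

section
/- Let D be the unique ℂ-derivation of K = ℂ(α₀,α₁,α₂,φ₀,φ₁,φ₂) with D(αⱼ) = 0 and D(φⱼ) = φⱼ(φ_{j+1} − φ_{j+2}) + αⱼ for j ∈ {0,1,2} (indices modulo 3), encoding the symmetric form of the fourth Painlevé equation. Then each of the automorphisms s₀, s₁, s₂, π commutes with D: sᵢ ∘ D = D ∘ sᵢ and π ∘ D = D ∘ π; that is, s₀, s₁, s₂, π are Bäcklund transformations for the symmetric form of P_IV. -/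
/-!
The automorphisms s₀, s₁, s₂, π of K = ℂ(α₀,α₁,α₂,φ₀,φ₁,φ₂) are Bäcklund
transformations of the symmetric form of the fourth Painlevé equation: they
commute with the derivation D encoding the system
φⱼ' = φⱼ(φ_{j+1} − φ_{j+2}) + αⱼ, αⱼ' = 0.
-/

open MvPolynomial

noncomputable section

/-!
The elements on which `f ∘ D` and `D' ∘ f` agree form a subfield, so the commutation relations only
have to be checked on the generators `αⱼ`, `φⱼ`. For the rotation this is the cyclic symmetry of the
system. The reflection `sᵢ` shifts `φᵢ₊₁`, `φᵢ₊₂` by `± r` with `r = αᵢ / φᵢ`, and what makes it a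
symmetry is that `r` solves the Riccati equation `r' = -r (φᵢ₊₁ - φᵢ₊₂) - r²`.
-/

section Generators

variable {k K L : Type*} [Field k] [Field K] [Field L] [Algebra k K] [Algebra k L]

theorem map_derivation_eq_of_adjoin_eq_top {S : Set K} (hS : IntermediateField.adjoin k S = ⊤)
    (D : Derivation k K K) (D' : Derivation k L L) (f : K →ₐ[k] L)
    (hf : ∀ x ∈ S, f (D x) = D' (f x)) (x : K) : f (D x) = D' (f x) := by
  have hx : x ∈ IntermediateField.adjoin k S := hS ▸ IntermediateField.mem_top
  induction hx using IntermediateField.adjoin_induction with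
  | mem x hx => exact hf x hx
  | algebraMap a => rw [D.map_algebraMap, f.commutes, D'.map_algebraMap, map_zero]
  | add x y _ _ hx hy => simp only [map_add, hx, hy]
  | inv x _ hx => simp only [map_inv₀, Derivation.leibniz_inv, smul_eq_mul, map_mul, map_neg,
      map_pow, hx]
  | mul x y _ _ hx hy => simp only [map_mul, Derivation.leibniz, smul_eq_mul, map_add, hx, hy]

theorem adjoin_range_algebraMap_X_eq_top (σ : Type*) [Algebra (MvPolynomial σ k) K]
    [IsScalarTower k (MvPolynomial σ k) K] [IsFractionRing (MvPolynomial σ k) K] :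
    IntermediateField.adjoin k
      (Set.range fun n : σ => algebraMap (MvPolynomial σ k) K (X n)) = ⊤ := by
  set E := IntermediateField.adjoin k
    (Set.range fun n : σ => algebraMap (MvPolynomial σ k) K (X n))
  have hpoly (p : MvPolynomial σ k) : algebraMap (MvPolynomial σ k) K p ∈ E := by
    induction p using MvPolynomial.induction_on with
    | C a =>
      rw [← MvPolynomial.algebraMap_eq, ← IsScalarTower.algebraMap_apply]
      exact E.algebraMap_mem a
    | add p q hp hq => exact map_add (algebraMap _ K) p q ▸ E.add_mem hp hq
    | mul_X p n hp =>
      rw [map_mul]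
      exact E.mul_mem hp (IntermediateField.subset_adjoin _ _ ⟨n, rfl⟩)
  refine eq_top_iff.2 fun x _ => ?_
  obtain ⟨p, q, -, rfl⟩ := IsFractionRing.div_surjective (A := MvPolynomial σ k) x
  exact E.div_mem (hpoly p) (hpoly q)

end Generators

lemma adjoin_range_αv_union_range_φv :
    IntermediateField.adjoin ℂ (Set.range αv ∪ Set.range φv) = ⊤ := by
  rw [← Set.Sum.elim_range, ← adjoin_range_algebraMap_X_eq_top (k := ℂ) (ZMod 3 ⊕ ZMod 3)]
  congr 2 with (j | j) <;> rfl

lemma φv_ne_zero (j : ZMod 3) : φv j ≠ 0 :=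
  (FaithfulSMul.algebraMap_eq_zero_iff PolyP4 KP4).not.2 (X_ne_zero _)

lemma cartanA2_self (i : ZMod 3) : cartanA2 i i = 2 :=
  if_pos rfl

lemma cartanA2_add_one (i : ZMod 3) : cartanA2 i (i + 1) = -1 := by
  decide +revert

lemma cartanA2_add_two (i : ZMod 3) : cartanA2 i (i + 2) = -1 := by
  decide +revert

lemma orientA2_self (i : ZMod 3) : orientA2 i i = 0 :=
  if_pos rfl

lemma orientA2_add_one (i : ZMod 3) : orientA2 i (i + 1) = 1 := by
  decide +revert

lemma orientA2_add_two (i : ZMod 3) : orientA2 i (i + 2) = -1 := by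
  decide +revert

section CommRing

variable {R A : Type*} [CommRing R] [CommRing A] [Algebra R A]

/-- The symmetric form of the fourth Painlevé equation: the derivation `D` is the flow with
parameters `α` and unknowns `φ`. The parameters are not normalised by a value of `α₀ + α₁ + α₂`. -/
structure IsSymmetricPIV (D : Derivation R A A) (α φ : ZMod 3 → A) : Prop where
  deriv_param (j : ZMod 3) : D (α j) = 0
  deriv_unknown (j : ZMod 3) : D (φ j) = φ j * (φ (j + 1) - φ (j + 2)) + α j

/-- The endomorphism `f` acts on parameters and unknowns as the diagram rotation `π`. -/
structure IsRotation (f : A →ₐ[R] A) (α φ : ZMod 3 → A) : Prop where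
  map_param (j : ZMod 3) : f (α j) = α (j + 1)
  map_unknown (j : ZMod 3) : f (φ j) = φ (j + 1)

variable {D : Derivation R A A} {f : A →ₐ[R] A} {α φ : ZMod 3 → A}

lemma IsSymmetricPIV.deriv_unknown_add_one (hD : IsSymmetricPIV D α φ) (i : ZMod 3) :
    D (φ (i + 1)) = φ (i + 1) * (φ (i + 2) - φ i) + α (i + 1) := by
  have h : ∀ i : ZMod 3, i + 1 + 1 = i + 2 ∧ i + 1 + 2 = i := by decide
  rw [hD.deriv_unknown, (h i).1, (h i).2]

lemma IsSymmetricPIV.deriv_unknown_add_two (hD : IsSymmetricPIV D α φ) (i : ZMod 3) :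
    D (φ (i + 2)) = φ (i + 2) * (φ i - φ (i + 1)) + α (i + 2) := by
  have h : ∀ i : ZMod 3, i + 2 + 1 = i ∧ i + 2 + 2 = i + 1 := by decide
  rw [hD.deriv_unknown, (h i).1, (h i).2]

lemma IsRotation.map_deriv_param (hf : IsRotation f α φ) (hD : IsSymmetricPIV D α φ)
    (j : ZMod 3) : f (D (α j)) = D (f (α j)) := by
  rw [hf.map_param, hD.deriv_param, hD.deriv_param, map_zero]

lemma IsRotation.map_deriv_unknown (hf : IsRotation f α φ) (hD : IsSymmetricPIV D α φ)
    (j : ZMod 3) : f (D (φ j)) = D (f (φ j)) := by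
  simp only [hD.deriv_unknown, hf.map_unknown, hf.map_param, map_add, map_mul, map_sub,
    add_right_comm j 2 1]

end CommRing

section Field

variable {R K : Type*} [CommRing R] [Field K] [Algebra R K]

/-- The endomorphism `f` acts on parameters and unknowns as the simple reflection `sᵢ`. -/
structure IsReflection (i : ZMod 3) (f : K →ₐ[R] K) (α φ : ZMod 3 → K) : Prop where
  map_param (j : ZMod 3) : f (α j) = α j - (cartanA2 i j : K) * α i
  map_unknown (j : ZMod 3) : f (φ j) = φ j + (orientA2 i j : K) * (α i / φ i)

variable {D : Derivation R K K} {i : ZMod 3} {f : K →ₐ[R] K} {α φ : ZMod 3 → K}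

lemma IsSymmetricPIV.deriv_param_div_unknown (hD : IsSymmetricPIV D α φ) (hφ : φ i ≠ 0) :
    D (α i / φ i) = -(α i / φ i) * (φ (i + 1) - φ (i + 2)) - (α i / φ i) ^ 2 := by
  rw [Derivation.leibniz_div, hD.deriv_param, hD.deriv_unknown]
  simp only [smul_eq_mul]
  field_simp
  ring

namespace IsReflection

lemma map_param_self (hf : IsReflection i f α φ) : f (α i) = -α i := by
  rw [hf.map_param, cartanA2_self]
  push_cast
  ring

lemma map_param_add_one (hf : IsReflection i f α φ) : f (α (i + 1)) = α (i + 1) + α i := by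
  rw [hf.map_param, cartanA2_add_one, Int.cast_neg, Int.cast_one, neg_one_mul, sub_neg_eq_add]

lemma map_param_add_two (hf : IsReflection i f α φ) : f (α (i + 2)) = α (i + 2) + α i := by
  rw [hf.map_param, cartanA2_add_two, Int.cast_neg, Int.cast_one, neg_one_mul, sub_neg_eq_add]

lemma map_unknown_self (hf : IsReflection i f α φ) : f (φ i) = φ i := by
  rw [hf.map_unknown, orientA2_self, Int.cast_zero, zero_mul, add_zero]

lemma map_unknown_add_one (hf : IsReflection i f α φ) :
    f (φ (i + 1)) = φ (i + 1) + α i / φ i := by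
  rw [hf.map_unknown, orientA2_add_one, Int.cast_one, one_mul]

lemma map_unknown_add_two (hf : IsReflection i f α φ) :
    f (φ (i + 2)) = φ (i + 2) - α i / φ i := by
  rw [hf.map_unknown, orientA2_add_two, Int.cast_neg, Int.cast_one, neg_one_mul, sub_eq_add_neg]

lemma map_deriv_param (hf : IsReflection i f α φ) (hD : IsSymmetricPIV D α φ) (j : ZMod 3) :
    f (D (α j)) = D (f (α j)) := by
  rw [hf.map_param, map_sub, Derivation.leibniz, Derivation.map_intCast, hD.deriv_param,
    hD.deriv_param, map_zero, smul_zero, smul_zero, add_zero, sub_zero]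

lemma map_deriv_unknown_self (hf : IsReflection i f α φ) (hD : IsSymmetricPIV D α φ)
    (hφ : φ i ≠ 0) : f (D (φ i)) = D (f (φ i)) := by
  rw [hf.map_unknown_self, hD.deriv_unknown, map_add, map_mul, map_sub, hf.map_unknown_self,
    hf.map_unknown_add_one, hf.map_unknown_add_two, hf.map_param_self]
  linear_combination 2 * div_mul_cancel₀ (α i) hφ

lemma map_deriv_unknown_add_one (hf : IsReflection i f α φ) (hD : IsSymmetricPIV D α φ)
    (hφ : φ i ≠ 0) : f (D (φ (i + 1))) = D (f (φ (i + 1))) := by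
  rw [hf.map_unknown_add_one, map_add, hD.deriv_param_div_unknown hφ, hD.deriv_unknown_add_one,
    map_add, map_mul, map_sub, hf.map_unknown_self, hf.map_unknown_add_one,
    hf.map_unknown_add_two, hf.map_param_add_one]
  linear_combination -div_mul_cancel₀ (α i) hφ

lemma map_deriv_unknown_add_two (hf : IsReflection i f α φ) (hD : IsSymmetricPIV D α φ)
    (hφ : φ i ≠ 0) : f (D (φ (i + 2))) = D (f (φ (i + 2))) := by
  rw [hf.map_unknown_add_two, map_sub, hD.deriv_param_div_unknown hφ, hD.deriv_unknown_add_two,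
    map_add, map_mul, map_sub, hf.map_unknown_self, hf.map_unknown_add_one,
    hf.map_unknown_add_two, hf.map_param_add_two]
  linear_combination -div_mul_cancel₀ (α i) hφ

lemma map_deriv_unknown (hf : IsReflection i f α φ) (hD : IsSymmetricPIV D α φ)
    (hφ : φ i ≠ 0) (j : ZMod 3) : f (D (φ j)) = D (f (φ j)) := by
  have h : ∀ i j : ZMod 3, j = i ∨ j = i + 1 ∨ j = i + 2 := by decide
  rcases h i j with rfl | rfl | rfl
  · exact hf.map_deriv_unknown_self hD hφ
  · exact hf.map_deriv_unknown_add_one hD hφ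
  · exact hf.map_deriv_unknown_add_two hD hφ

end IsReflection

end Field

theorem backlund_transformations_commute_with_flow_PIV_general
    {k K : Type*} [Field k] [Field K] [Algebra k K] {D : Derivation k K K} {α φ : ZMod 3 → K}
    (hgen : IntermediateField.adjoin k (Set.range α ∪ Set.range φ) = ⊤) (hφ : ∀ i, φ i ≠ 0)
    (hD : IsSymmetricPIV D α φ) {s : ZMod 3 → (K →ₐ[k] K)} {π : K →ₐ[k] K}
    (hs : ∀ i, IsReflection i (s i) α φ) (hπ : IsRotation π α φ) :
    (∀ i x, s i (D x) = D (s i x)) ∧ ∀ x, π (D x) = D (π x) := by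
  refine ⟨fun i => map_derivation_eq_of_adjoin_eq_top hgen D D (s i) ?_,
    map_derivation_eq_of_adjoin_eq_top hgen D D π ?_⟩
  · rintro _ (⟨j, rfl⟩ | ⟨j, rfl⟩)
    exacts [(hs i).map_deriv_param hD j, (hs i).map_deriv_unknown hD (hφ i) j]
  · rintro _ (⟨j, rfl⟩ | ⟨j, rfl⟩)
    exacts [hπ.map_deriv_param hD j, hπ.map_deriv_unknown hD j]

/-- if D is the (unique) ℂ-derivation of K with D(αⱼ) = 0 and
D(φⱼ) = φⱼ(φ_{j+1} − φ_{j+2}) + αⱼ, then the automorphisms s₀, s₁, s₂, π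
(defined by sᵢ(αⱼ) = αⱼ − αᵢaᵢⱼ, sᵢ(φⱼ) = φⱼ + (αᵢ/φᵢ)uᵢⱼ, π(αⱼ) = α_{j+1},
π(φⱼ) = φ_{j+1}) all commute with D, i.e. they are Bäcklund transformations
of the symmetric form of P_IV. -/
theorem backlund_transformations_commute_with_flow_PIV
    (D : Derivation ℂ KP4 KP4)
    (hDα : ∀ j : ZMod 3, D (αv j) = 0)
    (hDφ : ∀ j : ZMod 3, D (φv j) = φv j * (φv (j + 1) - φv (j + 2)) + αv j)
    (s : ZMod 3 → (KP4 ≃ₐ[ℂ] KP4)) (π : KP4 ≃ₐ[ℂ] KP4)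
    (hsα : ∀ i j : ZMod 3, s i (αv j) = αv j - (cartanA2 i j : KP4) * αv i)
    (hsφ : ∀ i j : ZMod 3, s i (φv j) = φv j + (orientA2 i j : KP4) * (αv i / φv i))
    (hπα : ∀ j : ZMod 3, π (αv j) = αv (j + 1))
    (hπφ : ∀ j : ZMod 3, π (φv j) = φv (j + 1)) :
    (∀ (i : ZMod 3) (x : KP4), s i (D x) = D (s i x)) ∧
    (∀ x : KP4, π (D x) = D (π x)) :=
  backlund_transformations_commute_with_flow_PIV_general (s := fun i => s i) (π := π)
    adjoin_range_αv_union_range_φv φv_ne_zero ⟨hDα, hDφ⟩ (fun i => ⟨hsα i, hsφ i⟩) ⟨hπα, hπφ⟩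

end
end

section
/- The assignment T(aⱼ) = aⱼ and T(fⱼ) = aⱼa_{j+1}f_{j+1}·(1 + a_{j+2}f_{j+2} + a_{j+2}aⱼf_{j+2}fⱼ)/(1 + aⱼfⱼ + aⱼa_{j+1}fⱼf_{j+1}) for j ∈ {0,1,2} (indices modulo 3) extends to a field automorphism T of L = ℂ(a₀,a₁,a₂,f₀,f₁,f₂), and T commutes with each of the automorphisms s₀, s₁, s₂ and π: T ∘ sᵢ = sᵢ ∘ T and T ∘ π = π ∘ T. In other words, the extended affine Weyl group of type A₂⁽¹⁾ acts on the fourth q-Painlevé equation qP_IV as a group of Bäcklund transformations. -/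
/-!
The discrete time evolution T of the fourth q-Painlevé equation qP_IV
commutes with the multiplicative realization of the extended affine Weyl
group of type A₂⁽¹⁾; i.e. W̃(A₂⁽¹⁾) acts on qP_IV as a group of Bäcklund
transformations.
-/

open MvPolynomial

noncomputable section

abbrev PolyQ := MvPolynomial (ZMod 3 ⊕ ZMod 3) ℂ

abbrev LQ := FractionRing PolyQ

/-- The multiplicative root parameters a₀, a₁, a₂. -/
def av (j : ZMod 3) : LQ := algebraMap PolyQ LQ (X (Sum.inl j))

/-- The dependent variables f₀, f₁, f₂. -/
def fv (j : ZMod 3) : LQ := algebraMap PolyQ LQ (X (Sum.inr j))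

/-!
Put `Dⱼ = 1 + aⱼfⱼ + aⱼaⱼ₊₁fⱼfⱼ₊₁`, so that `T(fⱼ) = aⱼaⱼ₊₁fⱼ₊₁ Dⱼ₊₂/Dⱼ`.

Substituting `T(f)` into `aⱼ₊₁aⱼ₊₂ + aⱼ₊₁fⱼ₊₂ + fⱼ₊₁fⱼ₊₂` gives `aⱼ₊₁aⱼ₊₂Dⱼ`. Hence the `Dⱼ`, and
then the `fⱼ`, are rational in the `aⱼ` and the `T(fⱼ)`, so these six elements generate the function
field. As the transcendence degree is six, they are algebraically independent, and `T` extends to an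
automorphism.

Let `r = (aᵢ + fᵢ)/(1 + aᵢfᵢ)`. Then `sᵢ(Dᵢ) = (r/aᵢ) Dᵢ`, `sᵢ(Dᵢ₊₂) = Dᵢ₊₂` and
`T(r) = aᵢ Dᵢ₊₁/sᵢ(Dᵢ₊₁)`; these three identities give `T(sᵢ(fⱼ)) = sᵢ(T(fⱼ))` for every `j`.
Commutation with `π` is the cyclic symmetry of the formula for `T`.
-/

namespace QPIV

lemma aeval_ne_zero_of_eval_ne_zero {R A ι : Type*} [CommRing R] [CommRing A] [Algebra R A]
    {x : ι → A} (hx : AlgebraicIndependent R x) {p : MvPolynomial ι R} (c : ι → R)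
    (hp : eval c p ≠ 0) : aeval x p ≠ 0 := fun h =>
  hp <| by rw [hx.eq_zero_of_aeval_eq_zero p h, map_zero]

section PurelyTranscendental

variable {k L ι : Type*} [Field k] [Field L] [Algebra k L] {x y : ι → L}

lemma isAlgebraic_of_adjoin_eq_top {S : Set L} (hS : IntermediateField.adjoin k S = ⊤) :
    Algebra.IsAlgebraic (Algebra.adjoin k S) L := by
  have : IsFractionRing (Algebra.adjoin k S) L := .of_field _ _ fun z => by
    obtain ⟨u, hu, v, hv, rfl⟩ :=
      IntermediateField.mem_adjoin_iff_div.1 (hS ▸ IntermediateField.mem_top : z ∈ _)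
    exact ⟨⟨u, hu⟩, ⟨v, hv⟩, rfl⟩
  exact IsLocalization.isAlgebraic _ (nonZeroDivisors (Algebra.adjoin k S))

lemma algebraicIndependent_of_adjoin_eq_top [Finite ι] (hx : AlgebraicIndependent k x)
    (hy : IntermediateField.adjoin k (Set.range y) = ⊤) : AlgebraicIndependent k y :=
  have := isAlgebraic_of_adjoin_eq_top hy
  (Algebra.IsAlgebraic.isTranscendenceBasis_of_lift_le_trdeg_of_finite k y
    hx.lift_cardinalMk_le_trdeg).1

/-- The identification of a field `L = k(x)`, where the family `x` is algebraically independent,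
with the field of rational functions. -/
def rationalFunctionEquiv (hx : AlgebraicIndependent k x)
    (hgen : IntermediateField.adjoin k (Set.range x) = ⊤) :
    FractionRing (MvPolynomial ι k) ≃ₐ[k] L :=
  hx.aevalEquivField.trans <|
    (IntermediateField.equivOfEq hgen).trans IntermediateField.topEquiv

lemma rationalFunctionEquiv_X (hx : AlgebraicIndependent k x)
    (hgen : IntermediateField.adjoin k (Set.range x) = ⊤) (i : ι) :
    rationalFunctionEquiv hx hgen (algebraMap _ _ (X i : MvPolynomial ι k)) = x i :=
  (hx.aevalEquivField_algebraMap_apply_coe (X i)).trans (aeval_X x i)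

lemma exists_algEquiv_of_adjoin_eq_top [Finite ι] (hx : AlgebraicIndependent k x)
    (hxgen : IntermediateField.adjoin k (Set.range x) = ⊤)
    (hygen : IntermediateField.adjoin k (Set.range y) = ⊤) :
    ∃ σ : L ≃ₐ[k] L, ∀ i, σ (x i) = y i := by
  have hy := algebraicIndependent_of_adjoin_eq_top hx hygen
  refine ⟨(rationalFunctionEquiv hx hxgen).symm.trans (rationalFunctionEquiv hy hygen), fun i => ?_⟩
  rw [AlgEquiv.trans_apply, ← rationalFunctionEquiv_X hx hxgen i, AlgEquiv.symm_apply_apply,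
    rationalFunctionEquiv_X]

lemma algEquiv_ext_of_adjoin_eq_top (hx : IntermediateField.adjoin k (Set.range x) = ⊤)
    {σ τ : L ≃ₐ[k] L} (h : ∀ i, σ (x i) = τ (x i)) : σ = τ := by
  ext z
  have hz : z ∈ IntermediateField.adjoin k (Set.range x) := hx ▸ IntermediateField.mem_top
  induction hz using IntermediateField.adjoin_induction with
  | mem z hz => obtain ⟨i, rfl⟩ := hz; exact h i
  | algebraMap c => rw [AlgEquiv.commutes, AlgEquiv.commutes]
  | add u v _ _ hu hv => rw [map_add, map_add, hu, hv]
  | inv u _ hu => rw [map_inv₀, map_inv₀, hu]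
  | mul u v _ _ hu hv => rw [map_mul, map_mul, hu, hv]

lemma algebraicIndependent_algebraMap_X [Algebra (MvPolynomial ι k) L]
    [IsScalarTower k (MvPolynomial ι k) L] [IsFractionRing (MvPolynomial ι k) L] :
    AlgebraicIndependent k fun i : ι => algebraMap (MvPolynomial ι k) L (X i) :=
  (algebraicIndependent_X ι k).map' (f := IsScalarTower.toAlgHom k (MvPolynomial ι k) L)
    (IsFractionRing.injective _ _)

lemma adjoin_range_algebraMap_X [Algebra (MvPolynomial ι k) L]
    [IsScalarTower k (MvPolynomial ι k) L] [IsFractionRing (MvPolynomial ι k) L] :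
    IntermediateField.adjoin k (Set.range fun i : ι => algebraMap (MvPolynomial ι k) L (X i)) =
      ⊤ := by
  rw [← IsFractionRing.algHom_fieldRange_eq_of_comp_eq_of_range_eq (A := MvPolynomial ι k) (K := L)
    (f := AlgHom.id k L) (g := IsScalarTower.toAlgHom k (MvPolynomial ι k) L) rfl]
  · exact AlgHom.fieldRange_eq_top.2 Function.surjective_id
  · rw [← Algebra.map_top, ← adjoin_range_X, AlgHom.map_adjoin, ← Set.range_comp]
    rfl

end PurelyTranscendental

section CyclicIndex

variable (j : ZMod 3)

lemma index_add_one_add_one : j + 1 + 1 = j + 2 := by revert j; decide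
lemma index_add_one_add_two : j + 1 + 2 = j := by revert j; decide
lemma index_add_two_add_one : j + 2 + 1 = j := by revert j; decide
lemma index_add_two_add_two : j + 2 + 2 = j + 1 := by revert j; decide
lemma index_cases (i : ZMod 3) : j = i ∨ j = i + 1 ∨ j = i + 2 := by revert i j; decide

end CyclicIndex

/-- `Dⱼ = 1 + aⱼfⱼ + aⱼaⱼ₊₁fⱼfⱼ₊₁`, the denominator of `T(fⱼ)`. -/
def evolveDenom {R : Type*} [CommSemiring R] (a f : ZMod 3 → R) (j : ZMod 3) : R :=
  1 + a j * f j + a j * a (j + 1) * f j * f (j + 1)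

/-- The time evolution of qP_IV as a birational map: `T(fⱼ) = aⱼaⱼ₊₁fⱼ₊₁ Dⱼ₊₂ / Dⱼ`. -/
def evolve {K : Type*} [Field K] (a f : ZMod 3 → K) (j : ZMod 3) : K :=
  a j * a (j + 1) * f (j + 1) * evolveDenom a f (j + 2) / evolveDenom a f j

/-- `Gⱼ = aⱼ₊₁aⱼ₊₂ + aⱼ₊₁fⱼ₊₂ + fⱼ₊₁fⱼ₊₂`, which recovers `Dⱼ` up to the factor `aⱼ₊₁aⱼ₊₂` from the
evolved variables. -/
def evolveInvDenom {R : Type*} [CommSemiring R] (a f : ZMod 3 → R) (j : ZMod 3) : R :=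
  a (j + 1) * a (j + 2) + a (j + 1) * f (j + 2) + f (j + 1) * f (j + 2)

/-- The inverse time evolution `T⁻¹(fⱼ) = fⱼ₊₂ Gⱼ₊₂ / (aⱼaⱼ₊₁Gⱼ₊₁)`. -/
def evolveInv {K : Type*} [Field K] (a f : ZMod 3 → K) (j : ZMod 3) : K :=
  f (j + 2) * evolveInvDenom a f (j + 2) / (a j * a (j + 1) * evolveInvDenom a f (j + 1))

/-- The factor `(aᵢ + fᵢ)/(1 + aᵢfᵢ)` by which the reflection `sᵢ` rescales the neighbours
of `fᵢ`. -/
def reflectRatio {K : Type*} [Field K] (i : ZMod 3) (a f : ZMod 3 → K) : K :=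
  (a i + f i) / (1 + a i * f i)

/-- The action of the reflection `sᵢ` on the parameters. -/
def reflectParam {K : Type*} [Field K] (i : ZMod 3) (a : ZMod 3 → K) (j : ZMod 3) : K :=
  a j * a i ^ (-cartanA2 i j)

/-- The action of the reflection `sᵢ` on the dependent variables. -/
def reflectVar {K : Type*} [Field K] (i : ZMod 3) (a f : ZMod 3 → K) (j : ZMod 3) : K :=
  f j * reflectRatio i a f ^ orientA2 i j

section Map

lemma map_evolveDenom {A B H : Type*} [CommSemiring A] [CommSemiring B] [FunLike H A B]
    [RingHomClass H A B] (φ : H) (a f : ZMod 3 → A) (j : ZMod 3) :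
    φ (evolveDenom a f j) = evolveDenom (φ ∘ a) (φ ∘ f) j := by
  simp [evolveDenom]

variable {K M H : Type*} [Field K] [Field M] [FunLike H K M] [RingHomClass H K M]

lemma map_evolve (φ : H) (a f : ZMod 3 → K) (j : ZMod 3) :
    φ (evolve a f j) = evolve (φ ∘ a) (φ ∘ f) j := by
  simp [evolve, map_evolveDenom]

lemma map_reflectParam (φ : H) (i : ZMod 3) (a : ZMod 3 → K) (j : ZMod 3) :
    φ (reflectParam i a j) = reflectParam i (φ ∘ a) j := by
  simp only [reflectParam, map_mul, map_zpow₀, Function.comp_apply]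

lemma map_reflectVar (φ : H) (i : ZMod 3) (a f : ZMod 3 → K) (j : ZMod 3) :
    φ (reflectVar i a f j) = reflectVar i (φ ∘ a) (φ ∘ f) j := by
  simp only [reflectVar, reflectRatio, map_mul, map_zpow₀, map_div₀, map_add, map_one,
    Function.comp_apply]

end Map

section Inverse

variable {K : Type*} [Field K] {a f : ZMod 3 → K}

lemma evolveInvDenom_evolve (hD : ∀ j, evolveDenom a f j ≠ 0) (j : ZMod 3) :
    evolveInvDenom a (evolve a f) j = a (j + 1) * a (j + 2) * evolveDenom a f j := by
  have h₁ := hD (j + 1)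
  have h₂ := hD (j + 2)
  simp only [evolveInvDenom, evolve, index_add_one_add_one, index_add_one_add_two,
    index_add_two_add_one, index_add_two_add_two]
  field_simp
  simp only [evolveDenom, index_add_one_add_one, index_add_two_add_one]
  ring

lemma evolveInv_evolve (ha : ∀ j, a j ≠ 0) (hD : ∀ j, evolveDenom a f j ≠ 0) (j : ZMod 3) :
    evolveInv a (evolve a f) j = f j := by
  have h₁ := hD (j + 1)
  have h₂ := hD (j + 2)
  have a₀ := ha j
  have a₁ := ha (j + 1)
  have a₂ := ha (j + 2)
  simp only [evolveInv, evolveInvDenom_evolve hD, evolve, index_add_one_add_one,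
    index_add_one_add_two, index_add_two_add_one, index_add_two_add_two]
  field_simp

lemma evolveInv_mem {S : Type*} [SetLike S K] [SubfieldClass S K] {E : S}
    (ha : ∀ j, a j ∈ E) (hf : ∀ j, f j ∈ E) (j : ZMod 3) : evolveInv a f j ∈ E := by
  have hG (j : ZMod 3) : evolveInvDenom a f j ∈ E :=
    add_mem (add_mem (mul_mem (ha _) (ha _)) (mul_mem (ha _) (hf _))) (mul_mem (hf _) (hf _))
  exact div_mem (mul_mem (hf _) (hG _)) (mul_mem (mul_mem (ha _) (ha _)) (hG _))

lemma adjoin_range_elim_evolve {k : Type*} [Field k] [Algebra k K] (ha : ∀ j, a j ≠ 0)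
    (hD : ∀ j, evolveDenom a f j ≠ 0)
    (hgen : IntermediateField.adjoin k (Set.range (Sum.elim a f)) = ⊤) :
    IntermediateField.adjoin k (Set.range (Sum.elim a (evolve a f))) = ⊤ := by
  set E := IntermediateField.adjoin k (Set.range (Sum.elim a (evolve a f)))
  have hE (i) : Sum.elim a (evolve a f) i ∈ E := IntermediateField.subset_adjoin k _ ⟨i, rfl⟩
  rw [← top_le_iff, ← hgen, IntermediateField.adjoin_le_iff]
  rintro _ ⟨j | j, rfl⟩
  · exact hE (.inl j)
  · rw [Sum.elim_inr, ← evolveInv_evolve ha hD j]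
    exact evolveInv_mem (fun j => hE (.inl j)) (fun j => hE (.inr j)) j

end Inverse

section Equivariance

variable {K : Type*} [Field K] {i : ZMod 3} {a f : ZMod 3 → K}

lemma evolve_comp_add_one (j : ZMod 3) :
    evolve (fun l => a (l + 1)) (fun l => f (l + 1)) j = evolve a f (j + 1) := by
  simp only [evolve, evolveDenom, add_right_comm _ _ (1 : ZMod 3)]

lemma reflectParam_self (ha : a i ≠ 0) : reflectParam i a i = (a i)⁻¹ := by
  simp only [reflectParam, cartanA2, if_true, zpow_neg]
  field_simp

lemma reflectParam_add_one : reflectParam i a (i + 1) = a (i + 1) * a i := by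
  simp [reflectParam, cartanA2]

lemma reflectParam_add_two : reflectParam i a (i + 2) = a (i + 2) * a i := by
  have : (2 : ZMod 3) ≠ 0 := by decide
  simp [reflectParam, cartanA2, this]

lemma reflectVar_self : reflectVar i a f i = f i := by
  simp [reflectVar, orientA2]

lemma reflectVar_add_one : reflectVar i a f (i + 1) = f (i + 1) * reflectRatio i a f := by
  simp [reflectVar, orientA2]

lemma reflectVar_add_two : reflectVar i a f (i + 2) = f (i + 2) / reflectRatio i a f := by
  have h₀ : (2 : ZMod 3) ≠ 0 := by decide
  have h₁ : (2 : ZMod 3) ≠ 1 := by decide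
  simp [reflectVar, orientA2, h₀, h₁, div_eq_mul_inv]

lemma evolveDenom_reflect_self (ha : a i ≠ 0) (hv : 1 + a i * f i ≠ 0) :
    evolveDenom (reflectParam i a) (reflectVar i a f) i =
      reflectRatio i a f / a i * evolveDenom a f i := by
  simp only [evolveDenom, reflectParam_self ha, reflectParam_add_one, reflectVar_self,
    reflectVar_add_one, reflectRatio]
  field_simp

lemma evolveDenom_reflect_add_two (ha : a i ≠ 0) (hu : a i + f i ≠ 0) :
    evolveDenom (reflectParam i a) (reflectVar i a f) (i + 2) = evolveDenom a f (i + 2) := by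
  simp only [evolveDenom, index_add_two_add_one, reflectParam_self ha, reflectParam_add_two,
    reflectVar_self, reflectVar_add_two, reflectRatio]
  field_simp
  ring

lemma reflectRatio_evolve (hu : a i + f i ≠ 0) (hv : 1 + a i * f i ≠ 0)
    (hD : evolveDenom a f i ≠ 0) :
    reflectRatio i a (evolve a f) =
      a i * evolveDenom a f (i + 1) /
        evolveDenom (reflectParam i a) (reflectVar i a f) (i + 1) := by
  have hnum : a i + evolve a f i =
      a i * evolveDenom a f (i + 1) * ((1 + a i * f i) / evolveDenom a f i) := by
    rw [evolve]
    field_simp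
    simp only [evolveDenom, index_add_one_add_one, index_add_two_add_one]
    ring
  have hden : 1 + a i * evolve a f i =
      evolveDenom (reflectParam i a) (reflectVar i a f) (i + 1) *
        ((1 + a i * f i) / evolveDenom a f i) := by
    rw [evolve]
    field_simp
    simp only [evolveDenom, index_add_one_add_one, index_add_two_add_one, reflectParam_add_one,
      reflectParam_add_two, reflectVar_add_one, reflectVar_add_two, reflectRatio]
    field_simp
    ring
  rw [reflectRatio, hnum, hden, mul_div_mul_right _ _ (div_ne_zero hv hD)]

theorem evolve_reflect (ha : a i ≠ 0) (hu : a i + f i ≠ 0) (hv : 1 + a i * f i ≠ 0)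
    (hD : ∀ j, evolveDenom a f j ≠ 0)
    (hD' : evolveDenom (reflectParam i a) (reflectVar i a f) (i + 1) ≠ 0) :
    evolve (reflectParam i a) (reflectVar i a f) = reflectVar i a (evolve a f) := by
  have h₀ := hD i
  have h₁ := hD (i + 1)
  have hr : reflectRatio i a f ≠ 0 := div_ne_zero hu hv
  have hratio := reflectRatio_evolve hu hv h₀
  funext j
  obtain rfl | rfl | rfl := index_cases j i
  · simp only [reflectVar_self, evolve, evolveDenom_reflect_self ha hv,
      evolveDenom_reflect_add_two ha hu, reflectParam_self ha, reflectParam_add_one,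
      reflectVar_add_one]
    field_simp
  · simp only [reflectVar_add_one, hratio, evolve, index_add_one_add_one, index_add_one_add_two,
      evolveDenom_reflect_self ha hv, reflectParam_add_one, reflectParam_add_two,
      reflectVar_add_two]
    field_simp
  · simp only [reflectVar_add_two, hratio, evolve, index_add_two_add_one, index_add_two_add_two,
      evolveDenom_reflect_add_two ha hu, reflectParam_self ha, reflectParam_add_two,
      reflectVar_self]
    field_simp

end Equivariance

section FunctionField

variable {k L : Type*} [Field k] [Field L] [Algebra k L] {a f : ZMod 3 → L}

lemma add_ne_zero_of_algebraicIndependent (hind : AlgebraicIndependent k (Sum.elim a f))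
    (i : ZMod 3) : a i + f i ≠ 0 := by
  have h : aeval (Sum.elim a f) (X (.inl i) + X (.inr i) : MvPolynomial _ k) ≠ 0 :=
    aeval_ne_zero_of_eval_ne_zero hind (Sum.elim 1 0) (by simp)
  simpa using h

lemma one_add_mul_ne_zero_of_algebraicIndependent (hind : AlgebraicIndependent k (Sum.elim a f))
    (i : ZMod 3) : 1 + a i * f i ≠ 0 := by
  have h : aeval (Sum.elim a f) (1 + X (.inl i) * X (.inr i) : MvPolynomial _ k) ≠ 0 :=
    aeval_ne_zero_of_eval_ne_zero hind 0 (by simp)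
  simpa using h

lemma evolveDenom_ne_zero_of_algebraicIndependent
    (hind : AlgebraicIndependent k (Sum.elim a f)) (j : ZMod 3) : evolveDenom a f j ≠ 0 := by
  have h : aeval (Sum.elim a f) (evolveDenom (X ∘ .inl) (X ∘ .inr) j : MvPolynomial _ k) ≠ 0 :=
    aeval_ne_zero_of_eval_ne_zero hind 0 (by simp [evolveDenom])
  simpa [evolveDenom] using h

theorem exists_evolve_algEquiv (hind : AlgebraicIndependent k (Sum.elim a f))
    (hgen : IntermediateField.adjoin k (Set.range (Sum.elim a f)) = ⊤) :
    ∃ T : L ≃ₐ[k] L, T ∘ a = a ∧ T ∘ f = evolve a f := by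
  have ha (j) : a j ≠ 0 := hind.ne_zero (.inl j)
  obtain ⟨T, hT⟩ := exists_algEquiv_of_adjoin_eq_top hind hgen <|
    adjoin_range_elim_evolve ha (evolveDenom_ne_zero_of_algebraicIndependent hind) hgen
  exact ⟨T, funext fun j => hT (.inl j), funext fun j => hT (.inr j)⟩

theorem evolve_mul_reflect (hind : AlgebraicIndependent k (Sum.elim a f))
    (hgen : IntermediateField.adjoin k (Set.range (Sum.elim a f)) = ⊤) {T s : L ≃ₐ[k] L}
    (hTa : T ∘ a = a) (hTf : T ∘ f = evolve a f) {i : ZMod 3}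
    (hsa : s ∘ a = reflectParam i a) (hsf : s ∘ f = reflectVar i a f) : T * s = s * T := by
  have hD := evolveDenom_ne_zero_of_algebraicIndependent hind
  have hD' : evolveDenom (reflectParam i a) (reflectVar i a f) (i + 1) ≠ 0 := by
    rw [← hsa, ← hsf, ← map_evolveDenom]
    exact (map_ne_zero s).2 (hD _)
  have hcomm : evolve (reflectParam i a) (reflectVar i a f) = reflectVar i a (evolve a f) :=
    evolve_reflect (hind.ne_zero (.inl i)) (add_ne_zero_of_algebraicIndependent hind i)
      (one_add_mul_ne_zero_of_algebraicIndependent hind i) hD hD'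
  refine algEquiv_ext_of_adjoin_eq_top hgen ?_
  rintro (j | j)
  · calc T (s (a j)) = T (reflectParam i a j) := congr_arg T (congr_fun hsa j)
      _ = reflectParam i a j := by rw [map_reflectParam, hTa]
      _ = s (a j) := (congr_fun hsa j).symm
      _ = s (T (a j)) := congr_arg s (congr_fun hTa j).symm
  · calc T (s (f j)) = T (reflectVar i a f j) := congr_arg T (congr_fun hsf j)
      _ = reflectVar i a (evolve a f) j := by rw [map_reflectVar, hTa, hTf]
      _ = evolve (reflectParam i a) (reflectVar i a f) j := by rw [hcomm]
      _ = s (evolve a f j) := by rw [map_evolve, hsa, hsf]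
      _ = s (T (f j)) := congr_arg s (congr_fun hTf j).symm

theorem evolve_mul_rotate (hgen : IntermediateField.adjoin k (Set.range (Sum.elim a f)) = ⊤)
    {T π : L ≃ₐ[k] L} (hTa : T ∘ a = a) (hTf : T ∘ f = evolve a f)
    (hπa : π ∘ a = fun j => a (j + 1)) (hπf : π ∘ f = fun j => f (j + 1)) :
    T * π = π * T := by
  refine algEquiv_ext_of_adjoin_eq_top hgen ?_
  rintro (j | j)
  · calc T (π (a j)) = T (a (j + 1)) := congr_arg T (congr_fun hπa j)
      _ = a (j + 1) := congr_fun hTa _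
      _ = π (a j) := (congr_fun hπa j).symm
      _ = π (T (a j)) := congr_arg π (congr_fun hTa j).symm
  · calc T (π (f j)) = T (f (j + 1)) := congr_arg T (congr_fun hπf j)
      _ = evolve a f (j + 1) := congr_fun hTf _
      _ = π (evolve a f j) := by rw [map_evolve, hπa, hπf, evolve_comp_add_one]
      _ = π (T (f j)) := congr_arg π (congr_fun hTf j).symm

end FunctionField

lemma elim_av_fv : Sum.elim av fv = fun i => algebraMap PolyQ LQ (X i) := by
  ext (j | j) <;> rfl

lemma algebraicIndependent_av_fv : AlgebraicIndependent ℂ (Sum.elim av fv) :=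
  elim_av_fv ▸ algebraicIndependent_algebraMap_X

lemma adjoin_range_av_fv : IntermediateField.adjoin ℂ (Set.range (Sum.elim av fv)) = ⊤ :=
  elim_av_fv ▸ adjoin_range_algebraMap_X

end QPIV

open QPIV in
theorem qPIV_time_evolution_commutes_with_Weyl_action_general
    {k L : Type*} [Field k] [Field L] [Algebra k L] {a f : ZMod 3 → L}
    (hind : AlgebraicIndependent k (Sum.elim a f))
    (hgen : IntermediateField.adjoin k (Set.range (Sum.elim a f)) = ⊤)
    (s : ZMod 3 → (L ≃ₐ[k] L)) (π : L ≃ₐ[k] L)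
    (hsa : ∀ i j : ZMod 3, s i (a j) = a j * a i ^ (-(cartanA2 i j)))
    (hsf : ∀ i j : ZMod 3,
      s i (f j) = f j * ((a i + f i) / (1 + a i * f i)) ^ (orientA2 i j))
    (hπa : ∀ j : ZMod 3, π (a j) = a (j + 1))
    (hπf : ∀ j : ZMod 3, π (f j) = f (j + 1)) :
    ∃ T : L ≃ₐ[k] L,
      (∀ j : ZMod 3, T (a j) = a j) ∧
      (∀ j : ZMod 3, T (f j) =
        a j * a (j + 1) * f (j + 1) *
          (1 + a (j + 2) * f (j + 2) + a (j + 2) * a j * f (j + 2) * f j) /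
          (1 + a j * f j + a j * a (j + 1) * f j * f (j + 1))) ∧
      (∀ i : ZMod 3, T * s i = s i * T) ∧
      T * π = π * T := by
  obtain ⟨T, hTa, hTf⟩ := exists_evolve_algEquiv hind hgen
  refine ⟨T, congr_fun hTa, fun j => ?_, fun i => ?_, ?_⟩
  · simpa only [Function.comp_apply, evolve, evolveDenom, index_add_two_add_one]
      using congr_fun hTf j
  · exact evolve_mul_reflect hind hgen hTa hTf (funext (hsa i)) (funext (hsf i))
  · exact evolve_mul_rotate hgen hTa hTf (funext hπa) (funext hπf)

/-- the assignment T(aⱼ) = aⱼ,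
T(fⱼ) = aⱼa_{j+1}f_{j+1}(1 + a_{j+2}f_{j+2} + a_{j+2}aⱼf_{j+2}fⱼ)/(1 + aⱼfⱼ + aⱼa_{j+1}fⱼf_{j+1})
extends to an automorphism T of L = ℂ(a₀,a₁,a₂,f₀,f₁,f₂), and T commutes with
each of the Weyl group automorphisms s₀, s₁, s₂, π. -/
theorem qPIV_time_evolution_commutes_with_Weyl_action
    (s : ZMod 3 → (LQ ≃ₐ[ℂ] LQ)) (π : LQ ≃ₐ[ℂ] LQ)
    (hsa : ∀ i j : ZMod 3, s i (av j) = av j * av i ^ (-(cartanA2 i j)))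
    (hsf : ∀ i j : ZMod 3,
      s i (fv j) = fv j * ((av i + fv i) / (1 + av i * fv i)) ^ (orientA2 i j))
    (hπa : ∀ j : ZMod 3, π (av j) = av (j + 1))
    (hπf : ∀ j : ZMod 3, π (fv j) = fv (j + 1)) :
    ∃ T : LQ ≃ₐ[ℂ] LQ,
      (∀ j : ZMod 3, T (av j) = av j) ∧
      (∀ j : ZMod 3, T (fv j) =
        av j * av (j + 1) * fv (j + 1) *
          (1 + av (j + 2) * fv (j + 2) + av (j + 2) * av j * fv (j + 2) * fv j) /
          (1 + av j * fv j + av j * av (j + 1) * fv j * fv (j + 1))) ∧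
      (∀ i : ZMod 3, T * s i = s i * T) ∧
      T * π = π * T :=
  qPIV_time_evolution_commutes_with_Weyl_action_general QPIV.algebraicIndependent_av_fv
    QPIV.adjoin_range_av_fv s π hsa hsf hπa hπf

end
end

section
/- Let α₀, α₁, α₂ ∈ ℂ with α₀ + α₁ + α₂ = 1, let I ⊆ ℝ be an open interval, and let φ₀, φ₁, φ₂ : I → ℂ be differentiable functions satisfying the symmetric form of P_IV: φ₀' = φ₀(φ₁−φ₂)+α₀, φ₁' = φ₁(φ₂−φ₀)+α₁, φ₂' = φ₂(φ₀−φ₁)+α₂, together with the normalization φ₀(t)+φ₁(t)+φ₂(t) = t for all t ∈ I. Then y := φ₀ is twice differentiable, and at every t ∈ I with y(t) ≠ 0 it satisfies the second-order equation y'' = (y')²/(2y) + (3/2)y³ − 2ty² + (t²/2 + α₁ − α₂)y − α₀²/(2y); i.e., the symmetric form is equivalent to the fourth Painlevé equation for y = φ₀. -/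
/-!
Equivalence of the symmetric form of the fourth Painlevé equation with the
single second-order fourth Painlevé equation for y = φ₀, under the
normalization α₀ + α₁ + α₂ = 1 and φ₀ + φ₁ + φ₂ = t.
-/

open Set

/-!
Write `y = φ₀`, `d = φ₁ - φ₂` and `s = φ₀ + φ₁ + φ₂`, so that `y' = y d + α₀`. In
`d' = 2 φ₁ φ₂ - y (φ₁ + φ₂) + α₁ - α₂`, both `φ₁ + φ₂ = s - y` and
`2 φ₁ φ₂ = ((s - y)² - d²) / 2` are expressed through `y`, `d` and `s`. Hence `y'' = y' d + y d'`
is a polynomial in `y`, `d` and `s`. Its only terms containing `d` are `y d² / 2 + α₀ d`, and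
completing the square turns them into `((y')² - α₀²) / (2 y)` where `y ≠ 0`.
-/

section SymmetricPIV

variable {𝕜 𝔸 : Type*} [NontriviallyNormedField 𝕜] [NormedField 𝔸] [NormedAlgebra 𝕜 𝔸]
  {α0 α1 α2 s : 𝔸} {φ0 φ1 φ2 : 𝕜 → 𝔸} {t : 𝕜}

theorem hasDerivAt_sub_of_symmetric_PIV
    (h1 : HasDerivAt φ1 (φ1 t * (φ2 t - φ0 t) + α1) t)
    (h2 : HasDerivAt φ2 (φ2 t * (φ0 t - φ1 t) + α2) t) :
    HasDerivAt (fun u => φ1 u - φ2 u)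
      (2 * φ1 t * φ2 t - φ0 t * (φ1 t + φ2 t) + α1 - α2) t :=
  (h1.fun_sub h2).congr_deriv (by ring)

theorem hasDerivAt_deriv_of_symmetric_PIV [NeZero (2 : 𝔸)]
    (h0 : HasDerivAt φ0 (φ0 t * (φ1 t - φ2 t) + α0) t)
    (h1 : HasDerivAt φ1 (φ1 t * (φ2 t - φ0 t) + α1) t)
    (h2 : HasDerivAt φ2 (φ2 t * (φ0 t - φ1 t) + α2) t)
    (hs : φ0 t + φ1 t + φ2 t = s) :
    HasDerivAt (fun u => φ0 u * (φ1 u - φ2 u) + α0)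
      (φ0 t * (φ1 t - φ2 t) ^ 2 / 2 + α0 * (φ1 t - φ2 t)
        + (3 / 2) * φ0 t ^ 3 - 2 * s * φ0 t ^ 2 + (s ^ 2 / 2 + α1 - α2) * φ0 t) t := by
  have hsum : φ1 t + φ2 t = s - φ0 t := by linear_combination hs
  have hprod : 2 * φ1 t * φ2 t = ((s - φ0 t) ^ 2 - (φ1 t - φ2 t) ^ 2) / 2 := by
    rw [← hsum]
    field_simp
    ring
  have hderiv := (h0.fun_mul (hasDerivAt_sub_of_symmetric_PIV h1 h2)).add_const α0
  rw [hprod, hsum] at hderiv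
  refine hderiv.congr_deriv ?_
  field_simp
  ring

theorem sq_mul_add_div_sub_sq_div {K : Type*} [Field K] [NeZero (2 : K)] {y : K} (hy : y ≠ 0)
    (d a : K) :
    (y * d + a) ^ 2 / (2 * y) - a ^ 2 / (2 * y) = y * d ^ 2 / 2 + a * d := by
  field_simp
  ring

theorem symmetric_PIV_implies_PIV_general [NeZero (2 : 𝔸)]
    (h0 : HasDerivAt φ0 (φ0 t * (φ1 t - φ2 t) + α0) t)
    (h1 : HasDerivAt φ1 (φ1 t * (φ2 t - φ0 t) + α1) t)
    (h2 : HasDerivAt φ2 (φ2 t * (φ0 t - φ1 t) + α2) t)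
    (hs : φ0 t + φ1 t + φ2 t = s) :
    ∃ c : 𝔸,
      HasDerivAt (fun u => φ0 u * (φ1 u - φ2 u) + α0) c t ∧
      (φ0 t ≠ 0 →
        c = (φ0 t * (φ1 t - φ2 t) + α0) ^ 2 / (2 * φ0 t)
            + (3 / 2) * φ0 t ^ 3 - 2 * s * φ0 t ^ 2
            + (s ^ 2 / 2 + α1 - α2) * φ0 t
            - α0 ^ 2 / (2 * φ0 t)) := by
  refine ⟨_, hasDerivAt_deriv_of_symmetric_PIV h0 h1 h2 hs, fun hy => ?_⟩
  rw [← sq_mul_add_div_sub_sq_div hy]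
  ring

end SymmetricPIV

/-- if φ₀, φ₁, φ₂ solve the symmetric form of P_IV on an open
interval, with α₀+α₁+α₂ = 1 and φ₀+φ₁+φ₂ = t, then y = φ₀ is twice
differentiable, and wherever y ≠ 0 it satisfies
y'' = (y')²/(2y) + (3/2)y³ − 2ty² + (t²/2 + α₁ − α₂)y − α₀²/(2y).
(The first derivative y' is the function t ↦ φ₀(t)(φ₁(t) − φ₂(t)) + α₀
provided by the system itself.) -/
theorem symmetric_PIV_implies_PIV
    (α0 α1 α2 : ℂ) (hα : α0 + α1 + α2 = 1)
    (a b : ℝ) (φ0 φ1 φ2 : ℝ → ℂ)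
    (h0 : ∀ t ∈ Ioo a b, HasDerivAt φ0 (φ0 t * (φ1 t - φ2 t) + α0) t)
    (h1 : ∀ t ∈ Ioo a b, HasDerivAt φ1 (φ1 t * (φ2 t - φ0 t) + α1) t)
    (h2 : ∀ t ∈ Ioo a b, HasDerivAt φ2 (φ2 t * (φ0 t - φ1 t) + α2) t)
    (hnorm : ∀ t ∈ Ioo a b, φ0 t + φ1 t + φ2 t = (t : ℂ)) :
    ∀ t ∈ Ioo a b, ∃ c : ℂ,
      HasDerivAt (fun u => φ0 u * (φ1 u - φ2 u) + α0) c t ∧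
      (φ0 t ≠ 0 →
        c = (φ0 t * (φ1 t - φ2 t) + α0) ^ 2 / (2 * φ0 t)
            + (3 / 2) * φ0 t ^ 3 - 2 * (t : ℂ) * φ0 t ^ 2
            + ((t : ℂ) ^ 2 / 2 + α1 - α2) * φ0 t
            - α0 ^ 2 / (2 * φ0 t)) := by
  intro t ht
  exact symmetric_PIV_implies_PIV_general (h0 t ht) (h1 t ht) (h2 t ht) (hnorm t ht)
end

section
/- Let α₁, α₂ ∈ ℂ and set α₀ := 1 − α₁ − α₂. Let I ⊆ ℝ be an open interval and let q, p : I → ℂ be differentiable functions satisfying the Hamiltonian system dq/dt = ∂H/∂p, dp/dt = −∂H/∂q for the fourth Painlevé Hamiltonian H = qp(2p−q−2t) − 2α₁p − α₂q, i.e. q' = 4qp − q² − 2tq − 2α₁ and p' = −2p² + 2qp + 2tp + α₂. Then the functions φ₀ := −p + q/2 + t, φ₁ := −q/2, φ₂ := p satisfy dφⱼ/dt = 2φⱼ(φ_{j+1} − φ_{j+2}) + αⱼ for j = 0, 1, 2 (indices modulo 3), which is the symmetric form of P_IV up to rescaling. -/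
/-!
The Hamiltonian system of the fourth Painlevé equation, with Hamiltonian
H = qp(2p − q − 2t) − 2α₁p − α₂q, is transformed into the symmetric form of
P_IV by the invariant divisors φ₀ = −p + q/2 + t, φ₁ = −q/2, φ₂ = p.
-/

open Set

section SymmetricForm

variable {𝕜 A : Type*} [NontriviallyNormedField 𝕜] {s : Set 𝕜} {t : 𝕜}

theorem hasDerivWithinAt_algebraMap [NormedRing A] [NormedAlgebra 𝕜 A] :
    HasDerivWithinAt (fun x : 𝕜 => algebraMap 𝕜 A x) 1 s t :=
  (algebraMapCLM 𝕜 A).hasDerivWithinAt.congr_deriv (map_one (algebraMap 𝕜 A))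

-- Differentiate the constraint: in the cyclic sum the quadratic terms cancel.
theorem hasDerivWithinAt_symmetric_form_of_add_eq [NormedCommRing A] [NormedAlgebra 𝕜 A]
    {α0 α1 α2 : A} {φ0 φ1 φ2 : 𝕜 → A}
    (hα : α0 + α1 + α2 = 1) (hφ : ∀ x, φ0 x + φ1 x + φ2 x = algebraMap 𝕜 A x)
    (h1 : HasDerivWithinAt φ1 (2 * φ1 t * (φ2 t - φ0 t) + α1) s t)
    (h2 : HasDerivWithinAt φ2 (2 * φ2 t * (φ0 t - φ1 t) + α2) s t) :
    HasDerivWithinAt φ0 (2 * φ0 t * (φ1 t - φ2 t) + α0) s t := by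
  have hφ0 (x : 𝕜) : φ0 x = algebraMap 𝕜 A x - φ1 x - φ2 x := by
    linear_combination hφ x
  have hcyclic : φ0 t * (φ1 t - φ2 t) + φ1 t * (φ2 t - φ0 t) + φ2 t * (φ0 t - φ1 t) = 0 := by
    ring
  have hderiv : HasDerivWithinAt φ0
      (1 - (2 * φ1 t * (φ2 t - φ0 t) + α1) - (2 * φ2 t * (φ0 t - φ1 t) + α2)) s t :=
    ((hasDerivWithinAt_algebraMap.sub h1).sub h2).congr (fun x _ => hφ0 x) (hφ0 t)
  exact hderiv.congr_deriv (by linear_combination -hα - 2 * hcyclic)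

theorem hamiltonian_PIV_to_symmetric_form_general
    [NormedField A] [NormedAlgebra 𝕜 A] [NeZero (2 : A)] (α1 α2 : A) (q p : 𝕜 → A)
    (hq : HasDerivWithinAt q
      (4 * q t * p t - q t ^ 2 - 2 * algebraMap 𝕜 A t * q t - 2 * α1) s t)
    (hp : HasDerivWithinAt p
      (-2 * p t ^ 2 + 2 * q t * p t + 2 * algebraMap 𝕜 A t * p t + α2) s t) :
    let α0 : A := 1 - α1 - α2
    let φ0 : 𝕜 → A := fun x => -p x + q x / 2 + algebraMap 𝕜 A x
    let φ1 : 𝕜 → A := fun x => -(q x / 2)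
    let φ2 : 𝕜 → A := p
    HasDerivWithinAt φ0 (2 * φ0 t * (φ1 t - φ2 t) + α0) s t ∧
      HasDerivWithinAt φ1 (2 * φ1 t * (φ2 t - φ0 t) + α1) s t ∧
      HasDerivWithinAt φ2 (2 * φ2 t * (φ0 t - φ1 t) + α2) s t := by
  intro α0 φ0 φ1 φ2
  have hα : α0 + α1 + α2 = 1 := by ring
  have hφ (x : 𝕜) : φ0 x + φ1 x + φ2 x = algebraMap 𝕜 A x := by ring
  have hq_eq : q t = -2 * φ1 t := by
    simp only [φ1]
    field_simp
  have h1 : HasDerivWithinAt φ1 (2 * φ1 t * (φ2 t - φ0 t) + α1) s t := by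
    refine (hq.div_const 2).neg.congr_deriv ?_
    rw [← hφ t, hq_eq]
    field_simp
    ring
  have h2 : HasDerivWithinAt φ2 (2 * φ2 t * (φ0 t - φ1 t) + α2) s t := by
    refine hp.congr_deriv ?_
    rw [← hφ t, hq_eq]
    ring
  exact ⟨hasDerivWithinAt_symmetric_form_of_add_eq hα hφ h1 h2, h1, h2⟩

end SymmetricForm

/-- if (q,p) solves the Hamiltonian system
q' = 4qp − q² − 2tq − 2α₁, p' = −2p² + 2qp + 2tp + α₂ of H_IV on an open
interval, then φ₀ = −p + q/2 + t, φ₁ = −q/2, φ₂ = p satisfy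
φⱼ' = 2φⱼ(φ_{j+1} − φ_{j+2}) + αⱼ (indices mod 3, α₀ := 1 − α₁ − α₂),
the symmetric form of P_IV up to rescaling. -/
theorem hamiltonian_PIV_to_symmetric_form
    (α1 α2 : ℂ) (a b : ℝ) (q p : ℝ → ℂ)
    (hq : ∀ t ∈ Ioo a b,
      HasDerivAt q (4 * q t * p t - q t ^ 2 - 2 * (t : ℂ) * q t - 2 * α1) t)
    (hp : ∀ t ∈ Ioo a b,
      HasDerivAt p (-2 * p t ^ 2 + 2 * q t * p t + 2 * (t : ℂ) * p t + α2) t) :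
    let α0 : ℂ := 1 - α1 - α2
    let φ0 : ℝ → ℂ := fun t => -p t + q t / 2 + (t : ℂ)
    let φ1 : ℝ → ℂ := fun t => -(q t / 2)
    let φ2 : ℝ → ℂ := p
    ∀ t ∈ Ioo a b,
      HasDerivAt φ0 (2 * φ0 t * (φ1 t - φ2 t) + α0) t ∧
      HasDerivAt φ1 (2 * φ1 t * (φ2 t - φ0 t) + α1) t ∧
      HasDerivAt φ2 (2 * φ2 t * (φ0 t - φ1 t) + α2) t := by
  simp only [← hasDerivWithinAt_univ] at hq hp ⊢
  exact fun t ht => hamiltonian_PIV_to_symmetric_form_general α1 α2 q p (hq t ht) (hp t ht)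
end
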